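/- For every fixed s > 0, the Kullback–Leibler divergence D(f_Normal(·|log(ys), y⁻¹) ‖ f_logGamma(·|y,s)) between the Gaussian density with mean log(y·s) and variance 1/y and the log-Gamma density with parameters y and s tends to 0 as y → ∞. (Hence the logarithm of a Gamma(y, s) random variable is asymptotically Gaussian with mean log(ys) and variance 1/y for large y.) -/

import Mathlib

open Real MeasureTheory Filter

/-- Gaussian density with mean `m` and variance `v`. -/
noncomputable def fNormal (m v ξ : ℝ) : ℝ :=
  (Real.sqrt (2 * Real.pi * v))⁻¹ * Real.exp (-(ξ - m) ^ 2 / (2 * v))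

/-- log-Gamma density with parameters `r` and `s`. -/
noncomputable def fLogGamma (r s ξ : ℝ) : ℝ :=
  (Real.Gamma r * s ^ r)⁻¹ * Real.exp (r * ξ - Real.exp ξ / s)

/-- Kullback–Leibler divergence between densities `f` and `g` on `ℝ`. -/
noncomputable def KL (f g : ℝ → ℝ) : ℝ :=
  ∫ ξ : ℝ, f ξ * Real.log (f ξ / g ξ)

open ProbabilityTheory
open scoped NNReal Topology

/-! Writing `D` as a difference of Gaussian expectations of log-densities, and using the mean, the
variance and the exponential moment of a Gaussian, gives
`D = μ(y) + (y (exp (1 / (2 y)) - 1) - 1 / 2)`, where `μ` is Binet's function, the remainder in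
Stirling's formula for `log Γ`; in particular `D` does not depend on `s`. The bracket
tends to `0` because it compares a difference quotient of `exp` at `0` with the derivative. On the
integers `μ → 0` is Stirling's formula for the factorial, and the log-convexity of `Γ`
bounds the oscillation of `μ` on `[a, a + 1]` by `1 / (2 a)`, which extends the limit to real
arguments. -/

section Stirling

variable {a b x : ℝ}

theorem mul_log_sub_log_le (ha : 0 < a) (hb : 0 < b) : a * (log b - log a) ≤ b - a := by
  have h := mul_le_mul_of_nonneg_left (log_le_sub_one_of_pos (div_pos hb ha)) ha.le
  rwa [log_div hb.ne' ha.ne', mul_sub_one, mul_div_cancel₀ b ha.ne'] at h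

theorem log_Gamma_add_one (ha : 0 < a) : log (Gamma (a + 1)) = log (Gamma a) + log a := by
  rw [Gamma_add_one ha.ne', log_mul ha.ne' (Gamma_pos_of_pos ha).ne', add_comm]

theorem log_Gamma_add_le (ha : 0 < a) (hx₀ : 0 ≤ x) (hx₁ : x ≤ 1) :
    log (Gamma (a + x)) ≤ log (Gamma a) + x * log a := by
  have h_conv : log (Gamma ((1 - x) * a + x * (a + 1))) ≤
      (1 - x) * log (Gamma a) + x * log (Gamma (a + 1)) :=
    convexOn_log_Gamma.2 (Set.mem_Ioi.2 ha) (Set.mem_Ioi.2 (by positivity))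
      (sub_nonneg.2 hx₁) hx₀ (sub_add_cancel 1 x)
  calc log (Gamma (a + x)) = log (Gamma ((1 - x) * a + x * (a + 1))) := by ring_nf
    _ ≤ (1 - x) * log (Gamma a) + x * log (Gamma (a + 1)) := h_conv
    _ = log (Gamma a) + x * log a := by rw [log_Gamma_add_one ha]; ring

theorem le_log_Gamma_add (ha : 0 < a) (hx₀ : 0 ≤ x) (hx₁ : x ≤ 1) :
    log (Gamma a) + log a - (1 - x) * log (a + x) ≤ log (Gamma (a + x)) := by
  have h := log_Gamma_add_le (a := a + x) (x := 1 - x) (by positivity) (by linarith) (by linarith)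
  rw [add_add_sub_cancel, log_Gamma_add_one ha] at h
  linarith

/-- Binet's function, usually written `μ`: the remainder in Stirling's approximation of `log Γ`,
with the constant `log √(2π)` subtracted, so that it measures the error and tends to `0`. -/
noncomputable def binet (a : ℝ) : ℝ :=
  log (Gamma a) - ((a - 1 / 2) * log a - a + 1 / 2 * log (2 * π))

theorem abs_binet_add_sub_binet_le (ha : 0 < a) (hx₀ : 0 ≤ x) (hx₁ : x ≤ 1) :
    |binet (a + x) - binet a| ≤ (2 * a)⁻¹ := by
  have hax : 0 < a + x := by positivity
  set L := log (a + x) - log a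
  have h_lower : x - (a + 1 / 2) * L ≤ binet (a + x) - binet a := by
    unfold binet
    linarith [le_log_Gamma_add ha hx₀ hx₁]
  have h_upper : binet (a + x) - binet a ≤ x - (a + x - 1 / 2) * L := by
    unfold binet
    linarith [log_Gamma_add_le ha hx₀ hx₁]
  have h_le : a * L ≤ x := by simpa only [add_sub_cancel_left] using mul_log_sub_log_le ha hax
  have h_ge : x ≤ (a + x) * L := by linarith [mul_log_sub_log_le hax ha]
  have h_half : L / 2 ≤ (2 * a)⁻¹ := by
    rw [inv_eq_one_div, le_div_iff₀ (by positivity)]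
    linarith
  rw [abs_le]
  constructor <;> linarith

theorem binet_natCast_eq_log_stirlingSeq {n : ℕ} (hn : n ≠ 0) :
    binet n = log (Stirling.stirlingSeq n) - log √π := by
  have hn' : (0 : ℝ) < n := by positivity
  rw [binet, Stirling.log_stirlingSeq_formula, ← Gamma_nat_eq_factorial, log_Gamma_add_one hn',
    log_mul two_ne_zero hn'.ne', log_mul two_ne_zero pi_ne_zero, log_div hn'.ne' (exp_ne_zero 1),
    log_exp, log_sqrt pi_pos.le]
  ring

theorem tendsto_binet_natCast : Tendsto (fun n : ℕ => binet n) atTop (𝓝 0) := by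
  have h := (Stirling.tendsto_stirlingSeq_sqrt_pi.log (by positivity)).sub_const (log √π)
  rw [sub_self] at h
  refine h.congr' ?_
  filter_upwards [eventually_ne_atTop 0] with n hn
  exact (binet_natCast_eq_log_stirlingSeq hn).symm

theorem tendsto_binet_atTop : Tendsto binet atTop (𝓝 0) := by
  have h_floor : Tendsto (fun y : ℝ => (⌊y⌋₊ : ℝ)) atTop atTop :=
    tendsto_natCast_atTop_atTop.comp tendsto_nat_floor_atTop
  have h_osc : Tendsto (fun y : ℝ => binet y - binet ⌊y⌋₊) atTop (𝓝 0) := by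
    refine squeeze_zero_norm' ?_ (h_floor.const_mul_atTop two_pos).inv_tendsto_atTop
    filter_upwards [eventually_ge_atTop 1] with y hy
    have h_pos : (0 : ℝ) < ⌊y⌋₊ := Nat.cast_pos.2 (Nat.floor_pos.2 hy)
    have h := abs_binet_add_sub_binet_le h_pos (x := y - ⌊y⌋₊)
      (sub_nonneg.2 (Nat.floor_le (by positivity)))
      (by linarith [Nat.lt_floor_add_one y])
    rwa [add_sub_cancel] at h
  simpa only [Function.comp_def, sub_add_cancel, add_zero] using
    h_osc.add (tendsto_binet_natCast.comp tendsto_nat_floor_atTop)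

end Stirling

theorem tendsto_mul_exp_div_sub_one_atTop (c : ℝ) :
    Tendsto (fun y : ℝ => y * (exp (c / y) - 1)) atTop (𝓝 c) := by
  have h_deriv : HasDerivAt (fun t : ℝ => exp (c * t)) c 0 := by
    simpa using ((hasDerivAt_id (0 : ℝ)).const_mul c).exp
  refine (h_deriv.tendsto_slope_zero_right.comp tendsto_inv_atTop_nhdsGT_zero).congr fun y => ?_
  simp [div_eq_mul_inv]

section Gaussian

variable (m : ℝ) (v : ℝ≥0)

theorem integrable_id_gaussianReal : Integrable (fun ξ => ξ) (gaussianReal m v) :=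
  (memLp_id_gaussianReal 1).integrable le_rfl

theorem integrable_exp_gaussianReal : Integrable exp (gaussianReal m v) := by
  simpa only [one_mul] using integrable_exp_mul_gaussianReal (μ := m) (v := v) 1

theorem integral_exp_gaussianReal : ∫ ξ, exp ξ ∂gaussianReal m v = exp (m + v / 2) := by
  simpa only [mgf, one_mul, mul_one, one_pow] using
    congrFun (mgf_fun_id_gaussianReal (μ := m) (v := v)) 1

theorem integrable_sub_sq_gaussianReal :
    Integrable (fun ξ => (ξ - m) ^ 2) (gaussianReal m v) :=
  ((memLp_id_gaussianReal 2).sub (memLp_const m)).integrable_sq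

theorem integral_sub_sq_gaussianReal : ∫ ξ, (ξ - m) ^ 2 ∂gaussianReal m v = v := by
  have h := variance_eq_integral (μ := gaussianReal m v) (X := fun ξ => ξ)
    measurable_id'.aemeasurable
  rwa [variance_fun_id_gaussianReal, integral_id_gaussianReal, eq_comm] at h

end Gaussian

section LogDensities

theorem fNormal_pos (m : ℝ) {v : ℝ} (hv : 0 < v) (ξ : ℝ) : 0 < fNormal m v ξ := by
  unfold fNormal
  positivity

theorem log_fNormal (m : ℝ) {v : ℝ} (hv : 0 < v) (ξ : ℝ) :
    log (fNormal m v ξ) = -(1 / 2 * log (2 * π * v)) - (ξ - m) ^ 2 / (2 * v) := by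
  rw [fNormal, log_mul (by positivity) (exp_ne_zero _), log_exp, log_inv,
    log_sqrt (by positivity)]
  ring

variable {r s : ℝ}

theorem fLogGamma_pos (hr : 0 < r) (hs : 0 < s) (ξ : ℝ) : 0 < fLogGamma r s ξ := by
  have := Gamma_pos_of_pos hr
  unfold fLogGamma
  positivity

theorem log_fLogGamma (hr : 0 < r) (hs : 0 < s) (ξ : ℝ) :
    log (fLogGamma r s ξ) = r * ξ - exp ξ / s - (log (Gamma r) + r * log s) := by
  have h_Gamma := Gamma_pos_of_pos hr
  rw [fLogGamma, log_mul (by positivity) (exp_ne_zero _), log_exp, log_inv,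
    log_mul h_Gamma.ne' (by positivity), log_rpow hs]
  ring

variable (m : ℝ) {v : ℝ≥0}

theorem integrable_log_fNormal (hv : v ≠ 0) :
    Integrable (fun ξ => log (fNormal m v ξ)) (gaussianReal m v) := by
  simp only [log_fNormal m (NNReal.coe_pos.2 hv.pos)]
  exact (integrable_const _).sub ((integrable_sub_sq_gaussianReal m v).div_const _)

theorem integral_log_fNormal (hv : v ≠ 0) :
    ∫ ξ, log (fNormal m v ξ) ∂gaussianReal m v = -(1 / 2 * log (2 * π * v)) - 1 / 2 := by
  simp only [log_fNormal m (NNReal.coe_pos.2 hv.pos)]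
  rw [integral_sub (integrable_const _) ((integrable_sub_sq_gaussianReal m v).div_const _),
    integral_div, integral_sub_sq_gaussianReal, integral_const, probReal_univ, one_smul]
  field_simp

variable (v)

theorem integrable_log_fLogGamma (hr : 0 < r) (hs : 0 < s) :
    Integrable (fun ξ => log (fLogGamma r s ξ)) (gaussianReal m v) := by
  simp only [log_fLogGamma hr hs]
  exact (((integrable_id_gaussianReal m v).const_mul r).sub
    ((integrable_exp_gaussianReal m v).div_const s)).sub (integrable_const _)

theorem integral_log_fLogGamma (hr : 0 < r) (hs : 0 < s) :
    ∫ ξ, log (fLogGamma r s ξ) ∂gaussianReal m v =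
      r * m - exp (m + v / 2) / s - (log (Gamma r) + r * log s) := by
  have h_lin := (integrable_id_gaussianReal m v).const_mul r
  have h_exp := (integrable_exp_gaussianReal m v).div_const s
  have h_sub : Integrable (fun ξ => r * ξ - exp ξ / s) (gaussianReal m v) := h_lin.sub h_exp
  simp only [log_fLogGamma hr hs]
  rw [integral_sub h_sub (integrable_const _), integral_sub h_lin h_exp,
    integral_const_mul, integral_div, integral_id_gaussianReal, integral_exp_gaussianReal,
    integral_const, probReal_univ, one_smul]

end LogDensities

section KL

theorem KL_fNormal_eq_integral_gaussianReal (m : ℝ) {v : ℝ≥0} (hv : v ≠ 0) (g : ℝ → ℝ) :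
    KL (fNormal m v) g = ∫ ξ, log (fNormal m v ξ / g ξ) ∂gaussianReal m v :=
  (integral_gaussianReal_eq_integral_smul hv).symm

theorem KL_fNormal_fLogGamma (m : ℝ) {v r s : ℝ} (hv : 0 < v) (hr : 0 < r) (hs : 0 < s) :
    KL (fNormal m v) (fLogGamma r s) =
      log (Gamma r) + r * log s + exp (m + v / 2) / s - r * m -
        1 / 2 * log (2 * π * v) - 1 / 2 := by
  lift v to ℝ≥0 using hv.le
  have hv₀ : v ≠ 0 := (NNReal.coe_pos.1 hv).ne'
  have h_log (ξ : ℝ) : log (fNormal m v ξ / fLogGamma r s ξ) =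
      log (fNormal m v ξ) - log (fLogGamma r s ξ) :=
    log_div (fNormal_pos m hv ξ).ne' (fLogGamma_pos hr hs ξ).ne'
  simp only [KL_fNormal_eq_integral_gaussianReal m hv₀, h_log]
  rw [integral_sub (integrable_log_fNormal m hv₀) (integrable_log_fLogGamma m v hr hs),
    integral_log_fNormal m hv₀, integral_log_fLogGamma m v hr hs]
  ring

theorem KL_fNormal_fLogGamma_scaled {y s : ℝ} (hy : 0 < y) (hs : 0 < s) :
    KL (fNormal (log (y * s)) y⁻¹) (fLogGamma y s) =
      binet y + (y * (exp (1 / 2 / y) - 1) - 1 / 2) := by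
  have h_exp : exp (log (y * s) + y⁻¹ / 2) / s = y * exp (1 / 2 / y) := by
    rw [exp_add, exp_log (by positivity)]
    field_simp
  rw [KL_fNormal_fLogGamma _ (inv_pos.2 hy) hy hs, h_exp, binet, log_mul hy.ne' hs.ne',
    log_mul (by positivity) (by positivity), log_inv]
  ring

end KL

theorem kl_normal_logGamma_scaled_tendsto_zero (s : ℝ) (hs : 0 < s) :
    Tendsto (fun y : ℝ => KL (fNormal (Real.log (y * s)) y⁻¹) (fLogGamma y s))
      atTop (nhds 0) := by
  have h_lim : Tendsto (fun y : ℝ => binet y + (y * (exp (1 / 2 / y) - 1) - 1 / 2))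
      atTop (𝓝 0) := by
    simpa only [sub_self, add_zero] using
      tendsto_binet_atTop.add ((tendsto_mul_exp_div_sub_one_atTop (1 / 2)).sub_const (1 / 2))
  refine h_lim.congr' ?_
  filter_upwards [eventually_gt_atTop 0] with y hy
  exact (KL_fNormal_fLogGamma_scaled hy hs).symm
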